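/- Let (X,d) be a proper metric space, λ ∈ Δ_N, and ν = (ν₁,…,ν_N) ∈ 𝒫₁(X)^N. Consider the multi-marginal problem (MM): minimize ∫_{X^{N+1}} ∑ᵢ λᵢ d(xᵢ, x₀) dθ(x₀,x₁,…,x_N) over Borel probability measures θ on X^{N+1} whose coordinate-i marginal equals νᵢ for i = 1,…,N. Then: (1) the minimum value of the Wasserstein median problem min_{μ ∈ 𝒫₁(X)} ∑ᵢ λᵢ W₁(νᵢ,μ) equals the minimum of (MM), and both minima are attained; (2) if ν* ∈ Med_λ(ν), there exists an optimal θ for (MM) with π₀#θ = ν*, and conversely if θ is optimal for (MM), then π₀#θ ∈ Med_λ(ν), where π₀ is the projection onto the coordinate x₀; (3) if θ is optimal for (MM), ν* = π₀#θ, and λⱼ > 0, then the pushforward of θ by (x₀,…,x_N) ↦ (x₀, xⱼ) is an optimal transport plan between ν* and νⱼ, i.e. ∫ d(x₀,xⱼ) realizes W₁(ν*,νⱼ). -/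

import Mathlib

open MeasureTheory Filter Topology
open scoped ENNReal NNReal

/-- The set of couplings (transport plans): Borel probability measures on `X × X`
with first marginal `μ` and second marginal `ν`. -/
def Couplings {X : Type*} [MeasurableSpace X] (μ ν : Measure X) :
    Set (Measure (X × X)) :=
  {γ | IsProbabilityMeasure γ ∧ γ.map Prod.fst = μ ∧ γ.map Prod.snd = ν}

/-- The Wasserstein distance of order `1` between two measures on a metric space:
the infimum over couplings `γ` of `∫ d(x,y) dγ`. -/
noncomputable def W1 {X : Type*} [MetricSpace X] [MeasurableSpace X]
    (μ ν : Measure X) : ℝ :=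
  (⨅ γ ∈ Couplings μ ν, ∫⁻ p, edist p.1 p.2 ∂γ).toReal

/-- `𝒫₁(X)`: Borel probability measures on `X` with finite first moment. -/
def P1 (X : Type*) [MetricSpace X] [MeasurableSpace X] : Set (Measure X) :=
  {μ | IsProbabilityMeasure μ ∧ ∀ x₀ : X, Integrable (fun x => dist x₀ x) μ}

/-- `λ` belongs to the simplex `Δ_N`: nonnegative weights summing to `1`. -/
def memSimplex {N : ℕ} (l : Fin N → ℝ) : Prop :=
  (∀ i, 0 ≤ l i) ∧ ∑ i, l i = 1

/-- The dispersion functional `μ ↦ ∑ᵢ λᵢ W₁(νᵢ, μ)`. -/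
noncomputable def medCost {X : Type*} [MetricSpace X] [MeasurableSpace X] {N : ℕ}
    (l : Fin N → ℝ) (ν : Fin N → Measure X) (μ : Measure X) : ℝ :=
  ∑ i, l i * W1 (ν i) μ

/-- The set of Wasserstein medians of `ν₁, …, ν_N` with weights `λ`:
minimizers over `𝒫₁(X)` of the dispersion functional. -/
def Med {X : Type*} [MetricSpace X] [MeasurableSpace X] {N : ℕ}
    (l : Fin N → ℝ) (ν : Fin N → Measure X) : Set (Measure X) :=
  {μ | μ ∈ P1 X ∧ ∀ ρ ∈ P1 X, medCost l ν μ ≤ medCost l ν ρ}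

/-- Admissibility for the multi-marginal problem: `θ` is a Borel probability measure on
`X × X^N` whose `i`-th marginal (for `i = 1,…,N`) is `νᵢ`. -/
def MMAdmissible {X : Type*} [MeasurableSpace X] {N : ℕ} (ν : Fin N → Measure X)
    (θ : Measure (X × (Fin N → X))) : Prop :=
  IsProbabilityMeasure θ ∧ ∀ i, θ.map (fun p => p.2 i) = ν i

/-- The multi-marginal cost `∫ ∑ᵢ λᵢ d(xᵢ, x₀) dθ(x₀, x₁, …, x_N)`. -/
noncomputable def MMCost {X : Type*} [MetricSpace X] [MeasurableSpace X] {N : ℕ}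
    (l : Fin N → ℝ) (θ : Measure (X × (Fin N → X))) : ℝ≥0∞ :=
  ∫⁻ p, ∑ i, ENNReal.ofReal (l i) * edist (p.2 i) p.1 ∂θ

/-- Optimality for the multi-marginal problem. -/
def MMOptimal {X : Type*} [MetricSpace X] [MeasurableSpace X] {N : ℕ}
    (l : Fin N → ℝ) (ν : Fin N → Measure X) (θ : Measure (X × (Fin N → X))) : Prop :=
  MMAdmissible ν θ ∧ ∀ θ' : Measure (X × (Fin N → X)), MMAdmissible ν θ' →
    MMCost l θ ≤ MMCost l θ'

/-!
Minimize over the multi-marginal plans `θ` in two stages. For a fixed `x₀`-marginal `ρ`, the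
`(x₀, xᵢ)`-marginal of `θ` is a transport plan between `ρ` and `νᵢ`, so `θ` costs at least the
dispersion of `ρ`; gluing optimal plans along their common marginal `ρ` attains this bound. Hence
the optimal `θ` are exactly the plans whose `x₀`-marginal is a median and for which the bound is an
equality, and that equality forces each `(x₀, xⱼ)`-marginal with `λⱼ > 0` to be optimal. An optimal
`θ` exists by the direct method: a bound on the cost bounds the first moment of the `x₀`-marginal,
which gives tightness because closed balls are compact.
-/

lemma eq_of_le_of_sum_le_sum {ι : Type*} {s : Finset ι} {f g : ι → ℝ≥0∞}
    (hle : ∀ i ∈ s, f i ≤ g i) (hsum : ∑ i ∈ s, g i ≤ ∑ i ∈ s, f i)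
    (hf : ∑ i ∈ s, f i ≠ ∞) {i : ι} (hi : i ∈ s) : f i = g i := by
  classical
  refine le_antisymm (hle i hi) ?_
  rw [← Finset.add_sum_erase s f hi] at hsum hf
  refine (ENNReal.add_le_add_iff_right (ENNReal.add_ne_top.1 hf).2).1 ?_
  calc g i + ∑ k ∈ s.erase i, f k
      ≤ g i + ∑ k ∈ s.erase i, g k := by
        gcongr with k hk
        exact hle k (Finset.mem_of_mem_erase hk)
    _ = ∑ k ∈ s, g k := Finset.add_sum_erase s g hi
    _ ≤ f i + ∑ k ∈ s.erase i, f k := hsum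

section DirectMethod

variable {E : Type*} [MeasurableSpace E] [TopologicalSpace E] [OpensMeasurableSpace E]

lemma lowerSemicontinuous_lintegral {f : E → ℝ≥0∞} (hf : Continuous f) :
    LowerSemicontinuous fun μ : ProbabilityMeasure E => ∫⁻ x, f x ∂(μ : Measure E) := by
  have hfin (n : ℕ) (x : E) : min (f x) n ≠ ∞ :=
    ne_top_of_le_ne_top (ENNReal.natCast_ne_top n) (min_le_right _ _)
  have hcont (n : ℕ) : Continuous fun x => (min (f x) n).toNNReal :=
    ENNReal.continuousOn_toNNReal.comp_continuous (by fun_prop) (hfin n)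
  let g (n : ℕ) : BoundedContinuousFunction E ℝ≥0 :=
    BoundedContinuousFunction.mkOfBound ⟨_, hcont n⟩ n fun x y => by
      have hle (x : E) : ((min (f x) n).toNNReal : ℝ) ≤ n :=
        ENNReal.toReal_le_of_le_ofReal n.cast_nonneg (by simp)
      exact abs_sub_le_of_nonneg_of_le (NNReal.coe_nonneg _) (hle x) (NNReal.coe_nonneg _) (hle y)
  have hg (n : ℕ) (x : E) : (g n x : ℝ≥0∞) = min (f x) n := ENNReal.coe_toNNReal (hfin n x)
  have hsup (μ : ProbabilityMeasure E) :
      ∫⁻ x, f x ∂(μ : Measure E) = ⨆ n, ∫⁻ x, g n x ∂(μ : Measure E) := by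
    simp only [hg]
    rw [← lintegral_iSup (fun n => by fun_prop) fun m n hmn x => by gcongr]
    simp only [← inf_iSup_eq, ENNReal.iSup_natCast, inf_top_eq]
  simp only [hsup]
  exact lowerSemicontinuous_iSup fun n =>
    (ProbabilityMeasure.continuous_lintegral_boundedContinuousFunction (g n)).lowerSemicontinuous

lemma exists_mem_forall_lintegral_le [T2Space E] [BorelSpace E] {S : Set (Measure E)}
    (hprob : ∀ μ ∈ S, IsProbabilityMeasure μ)
    (hclosed : IsClosed {μ : ProbabilityMeasure E | (μ : Measure E) ∈ S})
    {f : E → ℝ≥0∞} (hf : Continuous f) {μ₀ : Measure E} (hμ₀ : μ₀ ∈ S)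
    (htight : IsTightMeasureSet {μ ∈ S | ∫⁻ x, f x ∂μ ≤ ∫⁻ x, f x ∂μ₀}) :
    ∃ μ ∈ S, ∀ μ' ∈ S, ∫⁻ x, f x ∂μ ≤ ∫⁻ x, f x ∂μ' := by
  let T : Set (ProbabilityMeasure E) :=
    {μ | (μ : Measure E) ∈ S ∧ ∫⁻ x, f x ∂(μ : Measure E) ≤ ∫⁻ x, f x ∂μ₀}
  have hT : IsCompact T := by
    have hT_closed : IsClosed T :=
      hclosed.inter ((lowerSemicontinuous_lintegral hf).isClosed_preimage _)
    refine hT_closed.closure_eq ▸ isCompact_closure_of_isTightMeasureSet (htight.subset ?_)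
    rintro _ ⟨μ, hμ, rfl⟩
    exact hμ
  obtain ⟨μ, hμ, hmin⟩ := LowerSemicontinuousOn.exists_isMinOn
    (s := T) ⟨⟨μ₀, hprob μ₀ hμ₀⟩, hμ₀, le_rfl⟩ hT
    ((lowerSemicontinuous_lintegral hf).lowerSemicontinuousOn T)
  refine ⟨μ, hμ.1, fun μ' hμ' => ?_⟩
  rcases le_total (∫⁻ x, f x ∂μ') (∫⁻ x, f x ∂μ₀) with hle | hge
  · exact hmin (show ⟨μ', hprob μ' hμ'⟩ ∈ T from ⟨hμ', hle⟩)
  · exact hμ.2.trans hge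

lemma isClosed_setOf_map_eq {F : Type*} [MeasurableSpace F] [TopologicalSpace F] [BorelSpace F]
    [HasOuterApproxClosed F] {g : E → F} (hg : Continuous g) (ν : Measure F) :
    IsClosed {μ : ProbabilityMeasure E | (μ : Measure E).map g = ν} := by
  by_cases hν : IsProbabilityMeasure ν
  · have hpreimage : {μ : ProbabilityMeasure E | (μ : Measure E).map g = ν} =
        (fun μ => μ.map hg.measurable.aemeasurable) ⁻¹' {(⟨ν, hν⟩ : ProbabilityMeasure F)} := by
      ext μ
      exact (Subtype.ext_iff (a1 := μ.map hg.measurable.aemeasurable) (a2 := ⟨ν, hν⟩)).symm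
    rw [hpreimage]
    exact isClosed_singleton.preimage (ProbabilityMeasure.continuous_map hg)
  · convert! isClosed_empty
    refine Set.eq_empty_iff_forall_notMem.2 fun μ hμ => hν ?_
    rw [← show (μ : Measure E).map g = ν from hμ]
    exact Measure.isProbabilityMeasure_map hg.measurable.aemeasurable

end DirectMethod

section Tightness

lemma isTightMeasureSet_of_lintegral_edist_le {X : Type*} [PseudoMetricSpace X] [ProperSpace X]
    [MeasurableSpace X] [OpensMeasurableSpace X] {S : Set (Measure X)} (a : X) {M : ℝ≥0∞}
    (hM : M ≠ ∞) (hS : ∀ μ ∈ S, ∫⁻ x, edist a x ∂μ ≤ M) : IsTightMeasureSet S := by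
  refine isTightMeasureSet_of_tendsto_measure_compl_closedBall (x := a) ?_
  have hlim : Tendsto (fun r : ℝ => M / ENNReal.ofReal r) atTop (𝓝 0) := by
    simpa using ENNReal.Tendsto.const_div ENNReal.tendsto_ofReal_atTop (Or.inr hM)
  refine tendsto_of_tendsto_of_tendsto_of_le_of_le' tendsto_const_nhds hlim
    (Eventually.of_forall fun r => zero_le) ?_
  filter_upwards [eventually_gt_atTop 0] with r hr
  refine iSup₂_le fun μ hμ => ?_
  calc μ (Metric.closedBall a r)ᶜ
      ≤ μ {x | ENNReal.ofReal r ≤ edist a x} := measure_mono fun x hx => by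
        rw [Set.mem_compl_iff, Metric.mem_closedBall', not_le] at hx
        rw [Set.mem_ofPred_eq, edist_dist]
        exact ENNReal.ofReal_le_ofReal hx.le
    _ ≤ (∫⁻ x, edist a x ∂μ) / ENNReal.ofReal r :=
        meas_ge_le_lintegral_div (by fun_prop) (ENNReal.ofReal_pos.2 hr).ne' ENNReal.ofReal_ne_top
    _ ≤ M / ENNReal.ofReal r := by gcongr; exact hS μ hμ

lemma isTightMeasureSet_of_map_eval {ι : Type*} [Finite ι] {X : ι → Type*}
    [∀ i, MeasurableSpace (X i)] [∀ i, TopologicalSpace (X i)] {S : Set (Measure (∀ i, X i))}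
    (hS : ∀ i, IsTightMeasureSet ((fun μ => μ.map fun x => x i) '' S)) :
    IsTightMeasureSet S := by
  have := Fintype.ofFinite ι
  simp only [isTightMeasureSet_iff_exists_isCompact_measure_compl_le] at hS ⊢
  intro ε hε
  choose K hK hle using fun i => hS i (ε / Fintype.card ι)
    (ENNReal.div_pos hε.ne' (ENNReal.natCast_ne_top _))
  refine ⟨Set.univ.pi K, isCompact_univ_pi hK, fun μ hμ => ?_⟩
  calc μ (Set.univ.pi K)ᶜ
      ≤ μ (⋃ i, (fun x : ∀ i, X i => x i) ⁻¹' (K i)ᶜ) := measure_mono fun x hx => by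
        simpa using hx
    _ ≤ ∑ i, μ ((fun x : ∀ i, X i => x i) ⁻¹' (K i)ᶜ) := measure_iUnion_fintype_le _ _
    _ ≤ ∑ _i : ι, ε / Fintype.card ι := Finset.sum_le_sum fun i _ =>
        (Measure.le_map_apply (measurable_pi_apply i).aemeasurable _).trans (hle i _ ⟨μ, hμ, rfl⟩)
    _ ≤ ε := by
        rw [Finset.sum_const, nsmul_eq_mul, Finset.card_univ]
        exact ENNReal.mul_div_le

end Tightness

section Gluing

open ProbabilityTheory

lemma measurable_measurePi_kernel {ι X : Type*} [Fintype ι] {Y : ι → Type*} [MeasurableSpace X]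
    [∀ i, MeasurableSpace (Y i)] (κ : ∀ i, Kernel X (Y i)) [∀ i, IsMarkovKernel (κ i)] :
    Measurable fun x => Measure.pi fun i => κ i x := by
  refine Measurable.measure_of_isPiSystem_of_isProbabilityMeasure
    generateFrom_pi.symm isPiSystem_pi ?_
  rintro _ ⟨s, hs, rfl⟩
  simp only [Measure.pi_pi]
  exact Finset.measurable_prod _ fun i _ => (κ i).measurable_coe (hs i trivial)

-- The gluing `θ` makes the `yᵢ` conditionally independent given `x`.
lemma exists_map_pair_eq_of_fst_eq {ι X : Type*} [Finite ι] {Y : ι → Type*} [MeasurableSpace X]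
    [∀ i, MeasurableSpace (Y i)] [∀ i, StandardBorelSpace (Y i)] [∀ i, Nonempty (Y i)]
    {ρ : Measure X} [IsFiniteMeasure ρ] {γ : ∀ i, Measure (X × Y i)} (hγ : ∀ i, (γ i).fst = ρ) :
    ∃ θ : Measure (X × ∀ i, Y i), θ.fst = ρ ∧ ∀ i, θ.map (fun p => (p.1, p.2 i)) = γ i := by
  have := Fintype.ofFinite ι
  have hfin (i : ι) : IsFiniteMeasure (γ i) :=
    have : IsFiniteMeasure ((γ i).map Prod.fst) := by rw [← Measure.fst, hγ i]; infer_instance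
    Measure.isFiniteMeasure_of_map measurable_fst.aemeasurable
  let κ : Kernel X (∀ i, Y i) :=
    ⟨fun x => Measure.pi fun i => (γ i).condKernel x, measurable_measurePi_kernel _⟩
  have : IsMarkovKernel κ := ⟨fun x => inferInstanceAs (IsProbabilityMeasure (Measure.pi _))⟩
  refine ⟨ρ ⊗ₘ κ, Measure.fst_compProd ρ κ, fun i => ?_⟩
  have hκ : κ.map (fun y => y i) = (γ i).condKernel := by
    ext1 x
    rw [Kernel.map_apply _ (measurable_pi_apply i)]
    exact (measurePreserving_eval (fun i => (γ i).condKernel x) i).map_eq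
  calc (ρ ⊗ₘ κ).map (fun p => (p.1, p.2 i))
      = ρ ⊗ₘ κ.map (fun y => y i) := (Measure.compProd_map (measurable_pi_apply i)).symm
    _ = γ i := by rw [hκ, ← hγ i, (γ i).disintegrate]

end Gluing

section FirstMoment

variable {X : Type*} [MetricSpace X] [MeasurableSpace X] [OpensMeasurableSpace X]

lemma integrable_dist_iff_lintegral_edist_ne_top {μ : Measure X} {a : X} :
    Integrable (fun x => dist a x) μ ↔ ∫⁻ x, edist a x ∂μ ≠ ∞ := by
  have hmeas : AEStronglyMeasurable (fun x => dist a x) μ := by fun_prop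
  rw [Integrable, and_iff_right hmeas,
    hasFiniteIntegral_iff_ofReal (ae_of_all _ fun _ => dist_nonneg), lt_top_iff_ne_top]
  simp only [edist_dist]

lemma mem_p1_iff_lintegral_edist_ne_top {μ : Measure X} [IsProbabilityMeasure μ] (a : X) :
    μ ∈ P1 X ↔ ∫⁻ x, edist a x ∂μ ≠ ∞ := by
  rw [← integrable_dist_iff_lintegral_edist_ne_top]
  refine ⟨fun hμ => hμ.2 a, fun ha => ⟨inferInstance, fun b => ?_⟩⟩
  refine ((integrable_const (dist b a)).add ha).mono' (by fun_prop) (ae_of_all _ fun x => ?_)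
  rw [Real.norm_of_nonneg dist_nonneg]
  exact dist_triangle b a x

end FirstMoment

section Couplings

variable {X : Type*} [MeasurableSpace X] {μ ν : Measure X}

lemma prod_mem_couplings (μ ν : Measure X) [IsProbabilityMeasure μ] [IsProbabilityMeasure ν] :
    μ.prod ν ∈ Couplings μ ν :=
  ⟨inferInstance, measurePreserving_fst.map_eq, measurePreserving_snd.map_eq⟩

lemma map_swap_mem_couplings {γ : Measure (X × X)} (hγ : γ ∈ Couplings μ ν) :
    γ.map Prod.swap ∈ Couplings ν μ := by
  obtain ⟨_, hfst, hsnd⟩ := hγ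
  refine ⟨Measure.isProbabilityMeasure_map (by fun_prop), ?_, ?_⟩
  · rwa [Measure.map_map measurable_fst measurable_swap]
  · rwa [Measure.map_map measurable_snd measurable_swap]

variable [TopologicalSpace X] [BorelSpace X]

lemma isClosed_setOf_mem_couplings [SecondCountableTopology X] [HasOuterApproxClosed X]
    (μ ν : Measure X) :
    IsClosed {γ : ProbabilityMeasure (X × X) | (γ : Measure (X × X)) ∈ Couplings μ ν} := by
  convert! (isClosed_setOf_map_eq (E := X × X) continuous_fst μ).inter
    (isClosed_setOf_map_eq continuous_snd ν) using 1
  ext γ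
  exact and_iff_right γ.2

variable [PolishSpace X]

lemma isTightMeasureSet_couplings (μ ν : Measure X) [IsFiniteMeasure μ] [IsFiniteMeasure ν] :
    IsTightMeasureSet (Couplings μ ν) := by
  refine IsTightMeasureSet.prodMk
    ((isTightMeasureSet_singleton (μ := μ)).subset ?_)
    ((isTightMeasureSet_singleton (μ := ν)).subset ?_)
  · rintro _ ⟨γ, hγ, rfl⟩
    exact hγ.2.1
  · rintro _ ⟨γ, hγ, rfl⟩
    exact hγ.2.2

lemma exists_mem_couplings_forall_lintegral_le (μ ν : Measure X) [IsProbabilityMeasure μ]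
    [IsProbabilityMeasure ν] {c : X × X → ℝ≥0∞} (hc : Continuous c) :
    ∃ γ ∈ Couplings μ ν, ∀ γ' ∈ Couplings μ ν, ∫⁻ p, c p ∂γ ≤ ∫⁻ p, c p ∂γ' :=
  exists_mem_forall_lintegral_le (fun _ hγ => hγ.1) (isClosed_setOf_mem_couplings μ ν) hc
    (prod_mem_couplings μ ν) ((isTightMeasureSet_couplings μ ν).subset fun _ hγ => hγ.1)

end Couplings

section Wasserstein

/-- The Wasserstein distance of order `1` with values in `[0, ∞]`: unlike in `W1`, whose `toReal`
sends `∞` to `0`, an infinite infimum stays infinite, so that minimizing it over all probability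
measures is meaningful. -/
noncomputable def eW1 {X : Type*} [EDist X] [MeasurableSpace X] (μ ν : Measure X) : ℝ≥0∞ :=
  ⨅ γ ∈ Couplings μ ν, ∫⁻ p, edist p.1 p.2 ∂γ

lemma eW1_le_lintegral_edist {X : Type*} [EDist X] [MeasurableSpace X] {μ ν : Measure X}
    {γ : Measure (X × X)} (hγ : γ ∈ Couplings μ ν) : eW1 μ ν ≤ ∫⁻ p, edist p.1 p.2 ∂γ :=
  iInf₂_le γ hγ

section PseudoEMetric

variable {X : Type*} [PseudoEMetricSpace X] [MeasurableSpace X]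

lemma exists_mem_couplings_lintegral_edist_eq_eW1 [PolishSpace X] [BorelSpace X]
    (μ ν : Measure X) [IsProbabilityMeasure μ] [IsProbabilityMeasure ν] :
    ∃ γ ∈ Couplings μ ν, ∫⁻ p, edist p.1 p.2 ∂γ = eW1 μ ν := by
  obtain ⟨γ, hγ, hmin⟩ := exists_mem_couplings_forall_lintegral_le μ ν
    (c := fun p => edist p.1 p.2) continuous_edist
  exact ⟨γ, hγ, le_antisymm (le_iInf₂ hmin) (eW1_le_lintegral_edist hγ)⟩

variable [OpensMeasurableSpace X]

lemma eW1_comm [SecondCountableTopology X] (μ ν : Measure X) : eW1 μ ν = eW1 ν μ := by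
  have hle (μ ν : Measure X) : eW1 μ ν ≤ eW1 ν μ := le_iInf₂ fun γ hγ => by
    refine (eW1_le_lintegral_edist (map_swap_mem_couplings hγ)).trans_eq ?_
    rw [lintegral_map (by fun_prop) measurable_swap]
    exact lintegral_congr fun p => edist_comm _ _
  exact le_antisymm (hle μ ν) (hle ν μ)

lemma lintegral_edist_le_add_eW1 (a : X) (μ ν : Measure X) :
    ∫⁻ x, edist a x ∂μ ≤ ∫⁻ x, edist a x ∂ν + eW1 μ ν := by
  rw [← tsub_le_iff_left]
  refine le_iInf₂ fun γ ⟨_, hfst, hsnd⟩ => tsub_le_iff_left.2 ?_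
  calc ∫⁻ x, edist a x ∂μ = ∫⁻ p, edist a p.1 ∂γ := by
        rw [← hfst, lintegral_map (by fun_prop) measurable_fst]
    _ ≤ ∫⁻ p, (edist a p.2 + edist p.1 p.2) ∂γ :=
        lintegral_mono fun p => edist_triangle_right _ _ _
    _ = ∫⁻ x, edist a x ∂ν + ∫⁻ p, edist p.1 p.2 ∂γ := by
        rw [lintegral_add_left (by fun_prop), ← hsnd, lintegral_map (by fun_prop) measurable_snd]

lemma eW1_le_lintegral_edist_add_lintegral_edist (a : X) (μ ν : Measure X)
    [IsProbabilityMeasure μ] [IsProbabilityMeasure ν] :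
    eW1 μ ν ≤ ∫⁻ x, edist a x ∂μ + ∫⁻ x, edist a x ∂ν :=
  calc eW1 μ ν ≤ ∫⁻ p, edist p.1 p.2 ∂(μ.prod ν) :=
        eW1_le_lintegral_edist (prod_mem_couplings μ ν)
    _ ≤ ∫⁻ p, (edist a p.1 + edist a p.2) ∂(μ.prod ν) :=
        lintegral_mono fun p => edist_triangle_left _ _ _
    _ = ∫⁻ x, edist a x ∂μ + ∫⁻ x, edist a x ∂ν := by
        rw [lintegral_add_left (by fun_prop),
          measurePreserving_fst.lintegral_comp (f := fun x => edist a x) (by fun_prop),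
          measurePreserving_snd.lintegral_comp (f := fun x => edist a x) (by fun_prop)]

end PseudoEMetric

section Metric

variable {X : Type*} [MetricSpace X] [MeasurableSpace X] {μ ν : Measure X}

lemma w1_nonneg (μ ν : Measure X) : 0 ≤ W1 μ ν := ENNReal.toReal_nonneg

variable [OpensMeasurableSpace X]

lemma eW1_ne_top (hμ : μ ∈ P1 X) (hν : ν ∈ P1 X) : eW1 μ ν ≠ ∞ := by
  have := hμ.1
  have := hν.1
  obtain ⟨a⟩ := nonempty_of_isProbabilityMeasure μ
  refine ne_top_of_le_ne_top (ENNReal.add_ne_top.2 ⟨?_, ?_⟩)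
    (eW1_le_lintegral_edist_add_lintegral_edist a μ ν)
  · exact (mem_p1_iff_lintegral_edist_ne_top a).1 hμ
  · exact (mem_p1_iff_lintegral_edist_ne_top a).1 hν

lemma ofReal_w1 (hμ : μ ∈ P1 X) (hν : ν ∈ P1 X) : ENNReal.ofReal (W1 μ ν) = eW1 μ ν :=
  ENNReal.ofReal_toReal (eW1_ne_top hμ hν)

lemma mem_p1_of_eW1_ne_top [IsProbabilityMeasure μ] (hν : ν ∈ P1 X) (h : eW1 μ ν ≠ ∞) :
    μ ∈ P1 X := by
  have := hν.1
  obtain ⟨a⟩ := nonempty_of_isProbabilityMeasure ν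
  rw [mem_p1_iff_lintegral_edist_ne_top a] at hν ⊢
  exact ne_top_of_le_ne_top (ENNReal.add_ne_top.2 ⟨hν, h⟩) (lintegral_edist_le_add_eW1 a μ ν)

end Metric

end Wasserstein

section Dispersion

/-- The dispersion functional `μ ↦ ∑ᵢ λᵢ W₁(νᵢ, μ)` with values in `[0, ∞]`, defined for all
measures `μ` whether or not they have finite first moment. -/
noncomputable def eMedCost {X : Type*} [EDist X] [MeasurableSpace X] {N : ℕ}
    (l : Fin N → ℝ) (ν : Fin N → Measure X) (μ : Measure X) : ℝ≥0∞ :=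
  ∑ i, ENNReal.ofReal (l i) * eW1 μ (ν i)

lemma eW1_le_eMedCost_div {X : Type*} [EDist X] [MeasurableSpace X] {N : ℕ} {l : Fin N → ℝ}
    (ν : Fin N → Measure X) (μ : Measure X) {j : Fin N} (hj : 0 < l j) :
    eW1 μ (ν j) ≤ eMedCost l ν μ / ENNReal.ofReal (l j) := by
  rw [ENNReal.le_div_iff_mul_le (Or.inl (ENNReal.ofReal_pos.2 hj).ne')
    (Or.inl ENNReal.ofReal_ne_top), mul_comm]
  exact Finset.single_le_sum (f := fun i => ENNReal.ofReal (l i) * eW1 μ (ν i))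
    (fun _ _ => zero_le) (Finset.mem_univ j)

variable {X : Type*} [MetricSpace X] [MeasurableSpace X] {N : ℕ} {l : Fin N → ℝ}
  {ν : Fin N → Measure X} {μ : Measure X}

lemma medCost_nonneg (hl : ∀ i, 0 ≤ l i) (ν : Fin N → Measure X) (μ : Measure X) :
    0 ≤ medCost l ν μ :=
  Finset.sum_nonneg fun i _ => mul_nonneg (hl i) (w1_nonneg (ν i) μ)

variable [OpensMeasurableSpace X]

lemma eMedCost_ne_top (hν : ∀ i, ν i ∈ P1 X) (hμ : μ ∈ P1 X) : eMedCost l ν μ ≠ ∞ :=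
  ENNReal.sum_ne_top.2 fun i _ => ENNReal.mul_ne_top ENNReal.ofReal_ne_top (eW1_ne_top hμ (hν i))

lemma mem_p1_of_eMedCost_ne_top [IsProbabilityMeasure μ] {j : Fin N} (hj : 0 < l j)
    (hν : ν j ∈ P1 X) (h : eMedCost l ν μ ≠ ∞) : μ ∈ P1 X :=
  mem_p1_of_eW1_ne_top hν <| ne_top_of_le_ne_top
    (ENNReal.div_ne_top h (ENNReal.ofReal_pos.2 hj).ne') (eW1_le_eMedCost_div ν μ hj)

variable [SecondCountableTopology X]

lemma ofReal_medCost (hl : ∀ i, 0 ≤ l i) (hν : ∀ i, ν i ∈ P1 X) (hμ : μ ∈ P1 X) :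
    ENNReal.ofReal (medCost l ν μ) = eMedCost l ν μ := by
  rw [medCost, ENNReal.ofReal_sum_of_nonneg fun i _ => mul_nonneg (hl i) (w1_nonneg (ν i) μ)]
  exact Finset.sum_congr rfl fun i _ => by
    rw [ENNReal.ofReal_mul (hl i), ofReal_w1 (hν i) hμ, eW1_comm]

lemma medCost_le_medCost_iff (hl : ∀ i, 0 ≤ l i) (hν : ∀ i, ν i ∈ P1 X) (hμ : μ ∈ P1 X)
    {ρ : Measure X} (hρ : ρ ∈ P1 X) :
    medCost l ν ρ ≤ medCost l ν μ ↔ eMedCost l ν ρ ≤ eMedCost l ν μ := by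
  rw [← ofReal_medCost hl hν hρ, ← ofReal_medCost hl hν hμ,
    ENNReal.ofReal_le_ofReal_iff (medCost_nonneg hl ν μ)]

lemma mem_med_iff_forall_eMedCost_le (hl : ∀ i, 0 ≤ l i) {j : Fin N} (hj : 0 < l j)
    (hν : ∀ i, ν i ∈ P1 X) {ρ : Measure X} :
    ρ ∈ Med l ν ↔ IsProbabilityMeasure ρ ∧
      ∀ μ : Measure X, IsProbabilityMeasure μ → eMedCost l ν ρ ≤ eMedCost l ν μ := by
  constructor
  · rintro ⟨hρ, hmin⟩
    refine ⟨hρ.1, fun μ _ => ?_⟩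
    by_cases hμ : eMedCost l ν μ = ∞
    · exact hμ ▸ le_top
    · have hμ : μ ∈ P1 X := mem_p1_of_eMedCost_ne_top hj (hν j) hμ
      exact (medCost_le_medCost_iff hl hν hμ hρ).1 (hmin μ hμ)
  · rintro ⟨_, hmin⟩
    have hρ : ρ ∈ P1 X := mem_p1_of_eMedCost_ne_top hj (hν j) <|
      ne_top_of_le_ne_top (eMedCost_ne_top hν (hν j)) (hmin _ (hν j).1)
    exact ⟨hρ, fun μ hμ => (medCost_le_medCost_iff hl hν hμ hρ).2 (hmin μ hμ.1)⟩

end Dispersion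

section MultiMarginal

lemma map_pair_mem_couplings {X : Type*} [MeasurableSpace X] {N : ℕ} {ν : Fin N → Measure X}
    {θ : Measure (X × (Fin N → X))} (hθ : MMAdmissible ν θ) (j : Fin N) :
    θ.map (fun p => (p.1, p.2 j)) ∈ Couplings (θ.map Prod.fst) (ν j) := by
  have := hθ.1
  have hpair : Measurable fun p : X × (Fin N → X) => (p.1, p.2 j) := by fun_prop
  refine ⟨Measure.isProbabilityMeasure_map hpair.aemeasurable, ?_, ?_⟩
  · rw [Measure.map_map measurable_fst hpair]
    rfl
  · rw [Measure.map_map measurable_snd hpair]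
    exact hθ.2 j

lemma isClosed_setOf_mmAdmissible {X : Type*} [TopologicalSpace X] [SecondCountableTopology X]
    [HasOuterApproxClosed X] [MeasurableSpace X] [BorelSpace X] {N : ℕ} (ν : Fin N → Measure X) :
    IsClosed {θ : ProbabilityMeasure (X × (Fin N → X)) |
      MMAdmissible ν (θ : Measure (X × (Fin N → X)))} := by
  convert! isClosed_iInter fun i => isClosed_setOf_map_eq (E := X × (Fin N → X))
    (g := fun p => p.2 i) (by fun_prop) (ν i) using 1
  ext θ
  simp only [MMAdmissible, Set.mem_iInter, Set.mem_ofPred_eq]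
  exact and_iff_right θ.2

variable {X : Type*} [MetricSpace X] [MeasurableSpace X] {N : ℕ} {l : Fin N → ℝ}
  {ν : Fin N → Measure X} {θ : Measure (X × (Fin N → X))}

section SecondCountable

variable [OpensMeasurableSpace X] [SecondCountableTopology X]

lemma mmCost_eq_sum_lintegral_map_pair (l : Fin N → ℝ) (θ : Measure (X × (Fin N → X))) :
    MMCost l θ = ∑ i, ENNReal.ofReal (l i) *
      ∫⁻ q, edist q.1 q.2 ∂(θ.map fun p => (p.1, p.2 i)) := by
  rw [MMCost, lintegral_finsetSum _ fun i _ => by fun_prop]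
  refine Finset.sum_congr rfl fun i _ => ?_
  rw [lintegral_const_mul _ (by fun_prop), lintegral_map (by fun_prop) (by fun_prop)]
  simp only [edist_comm]

lemma eMedCost_map_fst_le_mmCost (l : Fin N → ℝ) (hθ : MMAdmissible ν θ) :
    eMedCost l ν (θ.map Prod.fst) ≤ MMCost l θ := by
  rw [mmCost_eq_sum_lintegral_map_pair]
  unfold eMedCost
  gcongr with i
  exact eW1_le_lintegral_edist (map_pair_mem_couplings hθ i)

lemma lintegral_edist_map_pair_eq_eW1 (hθ : MMAdmissible ν θ)
    (heq : MMCost l θ = eMedCost l ν (θ.map Prod.fst)) (hfin : MMCost l θ ≠ ∞)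
    {j : Fin N} (hj : 0 < l j) :
    ∫⁻ q, edist q.1 q.2 ∂(θ.map fun p => (p.1, p.2 j)) = eW1 (θ.map Prod.fst) (ν j) := by
  rw [← ENNReal.mul_right_inj (ENNReal.ofReal_pos.2 hj).ne' ENNReal.ofReal_ne_top]
  refine (eq_of_le_of_sum_le_sum (s := Finset.univ)
    (f := fun i => ENNReal.ofReal (l i) * eW1 (θ.map Prod.fst) (ν i)) (fun i _ => ?_)
    ((mmCost_eq_sum_lintegral_map_pair l θ).ge.trans heq.le) (heq.symm.trans_ne hfin)
    (Finset.mem_univ j)).symm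
  gcongr
  exact eW1_le_lintegral_edist (map_pair_mem_couplings hθ i)

end SecondCountable

section Polish

variable [PolishSpace X] [BorelSpace X]

lemma exists_mmAdmissible_mmCost_eq_eMedCost (l : Fin N → ℝ) (ν : Fin N → Measure X)
    [∀ i, IsProbabilityMeasure (ν i)] (ρ : Measure X) [IsProbabilityMeasure ρ] :
    ∃ θ : Measure (X × (Fin N → X)),
      MMAdmissible ν θ ∧ θ.map Prod.fst = ρ ∧ MMCost l θ = eMedCost l ν ρ := by
  have := nonempty_of_isProbabilityMeasure ρ
  choose γ hγ hcost using fun i => exists_mem_couplings_lintegral_edist_eq_eW1 ρ (ν i)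
  obtain ⟨θ, hfst, hpair⟩ := exists_map_pair_eq_of_fst_eq fun i => (hγ i).2.1
  have : IsProbabilityMeasure (θ.map Prod.fst) := by rwa [← Measure.fst, hfst]
  refine ⟨θ, ⟨Measure.isProbabilityMeasure_of_map Prod.fst, fun i => ?_⟩, hfst, ?_⟩
  · rw [← (hγ i).2.2, ← hpair i, Measure.map_map measurable_snd (by fun_prop)]
    rfl
  · simp only [mmCost_eq_sum_lintegral_map_pair, hpair, hcost, eMedCost]

lemma mmOptimal_iff_map_fst_mem_med (hl : ∀ i, 0 ≤ l i) {j : Fin N} (hj : 0 < l j)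
    (hν : ∀ i, ν i ∈ P1 X) :
    MMOptimal l ν θ ↔ MMAdmissible ν θ ∧ θ.map Prod.fst ∈ Med l ν ∧
      MMCost l θ = eMedCost l ν (θ.map Prod.fst) := by
  have := fun i => (hν i).1
  rw [mem_med_iff_forall_eMedCost_le hl hj hν]
  constructor
  · rintro ⟨hθ, hmin⟩
    have := hθ.1
    have hρ : IsProbabilityMeasure (θ.map Prod.fst) :=
      Measure.isProbabilityMeasure_map measurable_fst.aemeasurable
    have hle (μ : Measure X) (hμ : IsProbabilityMeasure μ) : MMCost l θ ≤ eMedCost l ν μ := by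
      obtain ⟨θ', hθ', -, hcost⟩ := exists_mmAdmissible_mmCost_eq_eMedCost l ν μ
      exact hcost ▸ hmin θ' hθ'
    have hge := eMedCost_map_fst_le_mmCost l hθ
    exact ⟨hθ, ⟨hρ, fun μ hμ => hge.trans (hle μ hμ)⟩, (hle _ hρ).antisymm hge⟩
  · rintro ⟨hθ, ⟨-, hmin⟩, heq⟩
    refine ⟨hθ, fun θ' hθ' => ?_⟩
    have := hθ'.1
    calc MMCost l θ = eMedCost l ν (θ.map Prod.fst) := heq
      _ ≤ eMedCost l ν (θ'.map Prod.fst) :=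
          hmin _ (Measure.isProbabilityMeasure_map measurable_fst.aemeasurable)
      _ ≤ MMCost l θ' := eMedCost_map_fst_le_mmCost l hθ'

end Polish

section Proper

variable [ProperSpace X] [BorelSpace X]

lemma isTightMeasureSet_mmAdmissible_mmCost_le [∀ i, IsFiniteMeasure (ν i)] {j : Fin N}
    (hj : 0 < l j) (hνj : ν j ∈ P1 X) {C : ℝ≥0∞} (hC : C ≠ ∞) :
    IsTightMeasureSet {θ | MMAdmissible ν θ ∧ MMCost l θ ≤ C} := by
  have := hνj.1
  obtain ⟨a⟩ := nonempty_of_isProbabilityMeasure (ν j)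
  have hbound : ∫⁻ x, edist a x ∂(ν j) + C / ENNReal.ofReal (l j) ≠ ∞ :=
    ENNReal.add_ne_top.2 ⟨(mem_p1_iff_lintegral_edist_ne_top a).1 hνj,
      ENNReal.div_ne_top hC (ENNReal.ofReal_pos.2 hj).ne'⟩
  refine IsTightMeasureSet.prodMk (isTightMeasureSet_of_lintegral_edist_le a hbound ?_)
    (isTightMeasureSet_of_map_eval fun i => (isTightMeasureSet_singleton (μ := ν i)).subset ?_)
  · rintro _ ⟨θ, ⟨hθ, hcost⟩, rfl⟩
    refine (lintegral_edist_le_add_eW1 a _ (ν j)).trans ?_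
    gcongr
    refine (eW1_le_eMedCost_div ν _ hj).trans ?_
    gcongr
    exact (eMedCost_map_fst_le_mmCost l hθ).trans hcost
  · rintro _ ⟨_, ⟨θ, ⟨hθ, -⟩, rfl⟩, rfl⟩
    rw [Set.mem_singleton_iff, ← hθ.2 i]
    exact Measure.map_map (measurable_pi_apply i) measurable_snd

lemma exists_mmOptimal {j : Fin N} (hj : 0 < l j) (hν : ∀ i, ν i ∈ P1 X) :
    ∃ θ, MMOptimal l ν θ := by
  have := fun i => (hν i).1
  obtain ⟨θ₀, hθ₀, -, hcost⟩ := exists_mmAdmissible_mmCost_eq_eMedCost l ν (ν j)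
  have hfin : MMCost l θ₀ ≠ ∞ := hcost ▸ eMedCost_ne_top hν (hν j)
  have hcont : Continuous fun p : X × (Fin N → X) =>
      ∑ i, ENNReal.ofReal (l i) * edist (p.2 i) p.1 :=
    continuous_finsetSum _ fun i _ =>
      (ENNReal.continuous_const_mul ENNReal.ofReal_ne_top).comp (by fun_prop)
  exact exists_mem_forall_lintegral_le (S := {θ | MMAdmissible ν θ}) (fun _ hθ => hθ.1)
    (isClosed_setOf_mmAdmissible ν) hcont hθ₀
    (isTightMeasureSet_mmAdmissible_mmCost_le hj (hν j) hfin)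

end Proper

end MultiMarginal

/-- Multi-marginal formulation: (1) the Wasserstein median problem and
the multi-marginal problem have the same (attained) minimal value; (2) every median is
the `x₀`-marginal of some optimal multi-marginal plan, and conversely the `x₀`-marginal
of any optimal plan is a median; (3) for an optimal plan `θ` with `λⱼ > 0`, the
pushforward of `θ` by `(x₀,…,x_N) ↦ (x₀, xⱼ)` is an optimal transport plan between
`ν* = π₀#θ` and `νⱼ`. -/
theorem median_multimarginal_formulation
    {X : Type*} [MetricSpace X] [ProperSpace X] [MeasurableSpace X] [BorelSpace X]
    {N : ℕ} (hN : 1 ≤ N) {l : Fin N → ℝ} (hl : memSimplex l)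
    {ν : Fin N → Measure X} (hν : ∀ i, ν i ∈ P1 X) :
    ((Med l ν).Nonempty ∧ (∃ θ, MMOptimal l ν θ) ∧
      ∀ νstar ∈ Med l ν, ∀ θ : Measure (X × (Fin N → X)), MMOptimal l ν θ →
        MMCost l θ = ENNReal.ofReal (medCost l ν νstar)) ∧
    ((∀ νstar ∈ Med l ν, ∃ θ : Measure (X × (Fin N → X)),
        MMOptimal l ν θ ∧ θ.map Prod.fst = νstar) ∧
      (∀ θ : Measure (X × (Fin N → X)), MMOptimal l ν θ →
        θ.map Prod.fst ∈ Med l ν)) ∧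
    (∀ θ : Measure (X × (Fin N → X)), MMOptimal l ν θ → ∀ j : Fin N, 0 < l j →
      θ.map (fun p => (p.1, p.2 j)) ∈ Couplings (θ.map Prod.fst) (ν j) ∧
      (∫⁻ p, edist p.1 (p.2 j) ∂θ) =
        ENNReal.ofReal (W1 (θ.map Prod.fst) (ν j))) := by
  obtain ⟨j₀, -, hj₀⟩ : ∃ j ∈ Finset.univ, 0 < l j :=
    (Finset.sum_pos_iff_of_nonneg fun i _ => hl.1 i).1 (hl.2.symm ▸ one_pos)
  have := fun i => (hν i).1
  have hopt (θ : Measure (X × (Fin N → X))) := mmOptimal_iff_map_fst_mem_med (θ := θ) hl.1 hj₀ hν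
  have hcost (ρ) (hρ : ρ ∈ Med l ν) := ofReal_medCost hl.1 hν hρ.1
  obtain ⟨θ₀, hθ₀⟩ := exists_mmOptimal hj₀ hν
  refine ⟨⟨⟨_, ((hopt θ₀).1 hθ₀).2.1⟩, ⟨θ₀, hθ₀⟩, fun ρ hρ θ hθ => ?_⟩,
    ⟨fun ρ hρ => ?_, fun θ hθ => ((hopt θ).1 hθ).2.1⟩,
    fun θ hθ j hj => ⟨map_pair_mem_couplings hθ.1 j, ?_⟩⟩
  · obtain ⟨-, hmed, heq⟩ := (hopt θ).1 hθ
    rw [heq, ← hcost _ hmed, (hmed.2 ρ hρ.1).antisymm (hρ.2 _ hmed.1)]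
  · have := hρ.1.1
    obtain ⟨θ, hθ, rfl, heq⟩ := exists_mmAdmissible_mmCost_eq_eMedCost l ν ρ
    exact ⟨θ, (hopt θ).2 ⟨hθ, hρ, heq⟩, rfl⟩
  · obtain ⟨hθ, hmed, heq⟩ := (hopt θ).1 hθ
    rw [ofReal_w1 hmed.1 (hν j), ← lintegral_edist_map_pair_eq_eW1 hθ heq
      (heq.trans_ne (eMedCost_ne_top hν hmed.1)) hj, lintegral_map (by fun_prop) (by fun_prop)]
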